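/- Let $n \geq 1$. For a permutation $\pi$ of $[n]=\{1,\dots,n\}$, an index $i\in\{1,\dots,n-1\}$ is a descent of $\pi$ if $\pi(i)>\pi(i+1)$, and an index $i\in\{2,\dots,n-1\}$ is a peak of $\pi$ if $\pi(i-1)<\pi(i)>\pi(i+1)$; an involution of length $n$ is a permutation $\pi$ of $[n]$ with $\pi^2$ equal to the identity. Then for all integers $j,k\geq 0$, the number of involutions of length $n$ with exactly $j$ peaks and exactly $k$ descents equals the number of involutions of length $n$ with exactly $j$ peaks and exactly $n-1-k$ descents. (If $k>n-1$, both numbers are $0$.) -/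

import Mathlib

/-- The letter `π(i)` of the one-line notation of a permutation of `[n] = {1, …, n}`, both positions
and values being counted from `1`; a permutation of `[n]` is encoded as a permutation of `Fin n`
by shifting by one. The value outside `1 ≤ i ≤ n` is never used below. -/
def oneLine (n : ℕ) (π : Equiv.Perm (Fin n)) (i : ℕ) : ℕ :=
  if h : 1 ≤ i ∧ i ≤ n then (π ⟨i - 1, by omega⟩).val + 1 else 0

/-- The number of `i ∈ {1, …, n-1}` with `π(i) > π(i+1)`. -/
def des (n : ℕ) (π : Equiv.Perm (Fin n)) : ℕ :=
  ((Finset.Icc 1 (n - 1)).filter fun i => oneLine n π (i + 1) < oneLine n π i).card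

/-- The number of `i ∈ {2, …, n-1}` with `π(i-1) < π(i) > π(i+1)`. -/
def pk (n : ℕ) (π : Equiv.Perm (Fin n)) : ℕ :=
  ((Finset.Icc 2 (n - 1)).filter fun i =>
    oneLine n π (i - 1) < oneLine n π i ∧ oneLine n π (i + 1) < oneLine n π i).card

/-!
Fix a partition of a finite linear order into intervals. Counting how many elements of each block
an involution sends into each block gives a symmetric matrix. Among all permutations with a given
matrix exactly one is increasing on the blocks together with its inverse, namely the
lexicographically least one; when the matrix is symmetric, the inverse has the same two properties,
so this permutation is an involution. Passing to the dual order on the values, the same holds with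
decreasing in place of increasing. Hence there are as many involutions increasing on every block as
involutions decreasing on every block. Letting the partition vary, the descent set and the ascent
set have the same distribution on involutions, since a distribution on a finite poset is determined
by the sizes of the principal lower sets. The peaks are the descents not preceded by a descent, so
peaks and descents are jointly distributed on involutions as valleys and ascents. Conjugation by
the reversal turns valleys into peaks and preserves the number of ascents.
-/

open OrderDual Set

variable {α β ι κ : Type*}

section Equidistribution

variable {P : Type*} [PartialOrder P]

open Classical in
theorem mem_of_minimal_of_countP_le_eq {m₁ m₂ : Multiset P} {a : P}
    (h : ∀ p, m₁.countP (· ≤ p) = m₂.countP (· ≤ p)) (ha : Minimal (· ∈ m₁ + m₂) a) :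
    a ∈ m₂ := by
  rcases Multiset.mem_add.1 ha.prop with h₁ | h₂
  · have hpos : 0 < m₂.countP (· ≤ a) := h a ▸ Multiset.countP_pos.2 ⟨a, h₁, le_rfl⟩
    obtain ⟨c, hc, hca⟩ := Multiset.countP_pos.1 hpos
    rwa [← ha.eq_of_le (Multiset.mem_add.2 (Or.inr hc)) hca]
  · exact h₂

open Classical in
theorem multiset_eq_of_countP_le_eq {m₁ m₂ : Multiset P}
    (h : ∀ p, m₁.countP (· ≤ p) = m₂.countP (· ≤ p)) : m₁ = m₂ := by
  induction m₁ using Multiset.strongInductionOn generalizing m₂ with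
  | ih m₁ ih =>
    rcases {x | x ∈ m₁ + m₂}.eq_empty_or_nonempty with h₀ | h₀
    · have h₀ : m₁ + m₂ = 0 := Multiset.eq_zero_of_forall_notMem fun x hx => h₀.le hx
      rw [add_eq_zero] at h₀
      rw [h₀.1, h₀.2]
    · obtain ⟨a, ha⟩ := (m₁ + m₂).finite_toSet.exists_minimal h₀
      have ha₂ : a ∈ m₂ := mem_of_minimal_of_countP_le_eq h ha
      have ha₁ : a ∈ m₁ :=
        mem_of_minimal_of_countP_le_eq (fun p => (h p).symm) (add_comm m₁ m₂ ▸ ha)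
      obtain ⟨t₁, rfl⟩ := Multiset.exists_cons_of_mem ha₁
      obtain ⟨t₂, rfl⟩ := Multiset.exists_cons_of_mem ha₂
      rw [ih t₁ (Multiset.lt_cons_self t₁ a) fun p => by
        simpa only [Multiset.countP_cons, Nat.add_right_cancel_iff] using h p]

open Classical in
theorem ncard_sep_eq_countP_map {s : Set α} (hs : s.Finite) (f : α → β) (Q : β → Prop) :
    {x ∈ s | Q (f x)}.ncard = (hs.toFinset.val.map f).countP Q := by
  rw [Multiset.countP_map, ← Finset.filter_val, Finset.card_val, ← Set.ncard_coe_finset]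
  simp

theorem ncard_sep_comp_eq_of_ncard_sep_le_eq {s : Set α} (hs : s.Finite) {f g : α → P}
    (h : ∀ p, {x ∈ s | f x ≤ p}.ncard = {x ∈ s | g x ≤ p}.ncard) (Q : P → Prop) :
    {x ∈ s | Q (f x)}.ncard = {x ∈ s | Q (g x)}.ncard := by
  classical
  rw [ncard_sep_eq_countP_map hs, ncard_sep_eq_countP_map hs]
  refine congrArg _ (multiset_eq_of_countP_le_eq fun p => ?_)
  simpa only [ncard_sep_eq_countP_map hs _ (· ≤ p)] using h p

end Equidistribution

section BlockMatrix

/-- The number of elements of the block `b ⁻¹' {a}` that `σ` sends into the block `c ⁻¹' {d}`. The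
permutations with a given block matrix form a double coset of the two Young subgroups that
preserve the blocks of `b` and of `c`. -/
noncomputable def blockMatrix (b : α → ι) (c : β → κ) (σ : α → β) : Matrix ι κ ℕ :=
  Matrix.of fun a d => {i | b i = a ∧ c (σ i) = d}.ncard

theorem blockMatrix_symm (b : α → ι) (c : β → κ) (σ : α ≃ β) :
    blockMatrix c b σ.symm = (blockMatrix b c σ).transpose := by
  ext d a
  exact Set.ncard_congr (fun i _ => σ.symm i) (by simp +contextual) (by simp)
    fun i hi => ⟨σ i, by simpa [and_comm] using hi⟩

theorem blockMatrix_comp_swap [DecidableEq α] (b : α → ι) (c : β → κ) (σ : α → β) {i j : α}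
    (hij : b i = b j ∨ c (σ i) = c (σ j)) :
    blockMatrix b c (σ ∘ Equiv.swap i j) = blockMatrix b c σ := by
  ext a d
  rcases hij with hb | hc
  · have hb' (x : α) : b (Equiv.swap i j x) = b x := by grind
    exact Set.ncard_congr (fun x _ => Equiv.swap i j x) (by simp [hb']) (by simp)
      fun x hx => ⟨Equiv.swap i j x, by simpa [hb'] using hx⟩
  · have hc' (x : α) : c (σ (Equiv.swap i j x)) = c (σ x) := by grind
    simp [blockMatrix, hc']

theorem exists_ge_of_blockMatrix_eq [Finite α] [LinearOrder α] {b : α → ι} {c : β → κ}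
    {σ τ : α → β} (h : blockMatrix b c τ = blockMatrix b c σ) {i : α}
    (hlt : ∀ j < i, σ j = τ j) : ∃ j ≥ i, b j = b i ∧ c (τ j) = c (σ i) := by
  by_contra! hne
  have hsub : {j | b j = b i ∧ c (τ j) = c (σ i)} ⊂ {j | b j = b i ∧ c (σ j) = c (σ i)} := by
    refine (ssubset_iff_of_subset fun j hj => ?_).2
      ⟨i, ⟨rfl, rfl⟩, fun hi => hne i le_rfl rfl hi.2⟩
    have hji : j < i := not_le.1 fun hij => hne j hij hj.1 hj.2
    exact ⟨hj.1, hlt j hji ▸ hj.2⟩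
  exact (ncard_lt_ncard hsub).ne (congrFun₂ h (b i) (c (σ i)))

/-- The bijections without inversions inside a block of `b` or of `c`, that is, the minimal
representatives of the double cosets of Young subgroups. -/
def IsBlockSorted [Preorder α] [Preorder β] (b : α → ι) (c : β → κ) (σ : α ≃ β) : Prop :=
  (∀ a, StrictMonoOn σ (b ⁻¹' {a})) ∧ ∀ d, StrictMonoOn σ.symm (c ⁻¹' {d})

theorem isBlockSorted_trans_toDual_iff [Preorder α] [Preorder β] {b : α → ι} {c : β → κ}
    {σ : α ≃ β} : IsBlockSorted b (c ∘ ofDual) (σ.trans toDual) ↔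
      (∀ a, StrictAntiOn σ (b ⁻¹' {a})) ∧ ∀ d, StrictAntiOn σ.symm (c ⁻¹' {d}) :=
  and_congr (forall_congr' fun _ => strictMonoOn_toDual_comp_iff (f := σ))
    (forall_congr' fun _ => strictMonoOn_comp_ofDual_iff)

variable [LinearOrder α] [LinearOrder β] {b : α → ι} {c : β → κ} {σ τ : α ≃ β}

theorem isBlockSorted_of_forall_toLex_le
    (hmin : ∀ τ : α ≃ β, blockMatrix b c τ = blockMatrix b c σ → toLex ⇑σ ≤ toLex ⇑τ) :
    IsBlockSorted b c σ := by
  have hswap {i j : α} (hij : i < j) (hblock : b i = b j ∨ c (σ i) = c (σ j)) : σ i < σ j := by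
    by_contra! hle
    refine (hmin ((Equiv.swap i j).trans σ) (blockMatrix_comp_swap b c σ hblock)).not_gt ?_
    exact Pi.lex_desc hij.le (hle.lt_of_ne (σ.injective.ne hij.ne'))
  refine ⟨fun a i hi j hj hij => hswap hij (Or.inl (hi.trans hj.symm)), ?_⟩
  intro d x hx y hy hxy
  by_contra! hle
  have hyx := hswap (hle.lt_of_ne (σ.symm.injective.ne hxy.ne'))
    (Or.inr (by simpa using hy.trans hx.symm))
  simp only [Equiv.apply_symm_apply] at hyx
  exact hyx.not_gt hxy

variable [Finite α]

theorem IsBlockSorted.toLex_le (hτ : IsBlockSorted b c τ) (hc : ∀ d, (c ⁻¹' {d}).OrdConnected)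
    (h : blockMatrix b c τ = blockMatrix b c σ) : toLex ⇑τ ≤ toLex ⇑σ := by
  by_contra! hlt
  obtain ⟨i, heq, hi⟩ := hlt
  change σ i < τ i at hi
  have hci : c (τ i) = c (σ i) := by
    obtain ⟨j, hij, hb, hcj⟩ := exists_ge_of_blockMatrix_eq h heq
    have hle : τ i ≤ τ j := (hτ.1 (b i)).monotoneOn rfl hb hij
    exact (hc (c (σ i))).out rfl hcj ⟨hi.le, hle⟩
  have hpos : τ.symm (σ i) < i := by simpa using hτ.2 (c (σ i)) rfl hci hi
  have : σ (τ.symm (σ i)) = σ i := by simpa using heq _ hpos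
  exact hpos.ne (σ.injective this)

theorem existsUnique_isBlockSorted (b : α → ι) (hc : ∀ d, (c ⁻¹' {d}).OrdConnected)
    (σ : α ≃ β) : ∃! τ : α ≃ β, IsBlockSorted b c τ ∧ blockMatrix b c τ = blockMatrix b c σ := by
  have : Finite β := Finite.of_equiv α σ
  obtain ⟨τ, hτ, hmin⟩ := Set.exists_min_image {τ : α ≃ β | blockMatrix b c τ = blockMatrix b c σ}
    (fun τ => toLex ⇑τ) (Set.toFinite _) ⟨σ, rfl⟩
  have hsorted : IsBlockSorted b c τ :=
    isBlockSorted_of_forall_toLex_le fun ρ hρ => hmin ρ (hρ.trans hτ)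
  refine ⟨τ, ⟨hsorted, hτ⟩, fun ρ ⟨hρ, hρσ⟩ => DFunLike.coe_injective ?_⟩
  have hρτ : blockMatrix b c ρ = blockMatrix b c τ := hρσ.trans hτ.symm
  exact toLex_inj.1 ((hρ.toLex_le hc hρτ).antisymm (hsorted.toLex_le hc hρτ.symm))

end BlockMatrix

section Involutions

theorem inv_eq_self_iff_sq_eq_one {G : Type*} [Group G] {g : G} : g⁻¹ = g ↔ g ^ 2 = 1 := by
  rw [sq, inv_eq_iff_mul_eq_one]

theorem bijOn_blockMatrix_involutions {b : α → ι} {R : Equiv.Perm α → Prop}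
    (hinv : ∀ σ, R σ → R σ⁻¹)
    (hrep : ∀ σ : Equiv.Perm α, ∃! τ, R τ ∧ blockMatrix b b τ = blockMatrix b b σ) :
    BijOn (fun σ : Equiv.Perm α => blockMatrix b b σ) {σ | σ ^ 2 = 1 ∧ R σ}
      {M ∈ range fun σ : Equiv.Perm α => blockMatrix b b σ | M.IsSymm} := by
  have hsymm (σ : Equiv.Perm α) : blockMatrix b b ⇑σ⁻¹ = (blockMatrix b b σ).transpose :=
    blockMatrix_symm b b σ
  refine ⟨fun σ hσ => ⟨⟨σ, rfl⟩, ?_⟩, ?_, ?_⟩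
  · rw [Matrix.IsSymm, ← hsymm, inv_eq_self_iff_sq_eq_one.2 hσ.1]
  · exact fun σ hσ τ hτ h => (hrep τ).unique ⟨hσ.2, h⟩ ⟨hτ.2, rfl⟩
  · rintro _ ⟨⟨σ, rfl⟩, hM⟩
    obtain ⟨τ, ⟨hτ, hτσ⟩, huniq⟩ := hrep σ
    have hτ_inv : τ⁻¹ = τ := huniq _ ⟨hinv τ hτ, by rw [hsymm, hτσ, hM.eq]⟩
    exact ⟨τ, ⟨inv_eq_self_iff_sq_eq_one.1 hτ_inv, hτ⟩, hτσ⟩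

theorem ncard_involutions_strictMonoOn_eq_strictAntiOn [Finite α] [LinearOrder α] (b : α → ι)
    (hb : ∀ a, (b ⁻¹' {a}).OrdConnected) :
    {σ : Equiv.Perm α | σ ^ 2 = 1 ∧ ∀ a, StrictMonoOn σ (b ⁻¹' {a})}.ncard =
      {σ : Equiv.Perm α | σ ^ 2 = 1 ∧ ∀ a, StrictAntiOn σ (b ⁻¹' {a})}.ncard := by
  have hmono := bijOn_blockMatrix_involutions (R := IsBlockSorted b b) (fun σ h => h.symm)
    (existsUnique_isBlockSorted b hb)
  have hanti := bijOn_blockMatrix_involutions (b := b)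
    (R := fun σ => IsBlockSorted b (b ∘ ofDual) (σ.trans toDual))
    (fun σ h => isBlockSorted_trans_toDual_iff.2 (isBlockSorted_trans_toDual_iff.1 h).symm)
    fun σ => ((Equiv.refl α).equivCongr toDual).existsUnique_congr_left.2 <| by
      simpa using! existsUnique_isBlockSorted b (fun d => (hb d).dual) (σ.trans toDual)
  have hsymm {σ : Equiv.Perm α} (hσ : σ ^ 2 = 1) : σ.symm = σ := inv_eq_self_iff_sq_eq_one.2 hσ
  have mono_iff {σ : Equiv.Perm α} (hσ : σ ^ 2 = 1) :
      (∀ a, StrictMonoOn σ (b ⁻¹' {a})) ↔ IsBlockSorted b b σ := by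
    rw [IsBlockSorted, hsymm hσ, and_self]
  have anti_iff {σ : Equiv.Perm α} (hσ : σ ^ 2 = 1) :
      (∀ a, StrictAntiOn σ (b ⁻¹' {a})) ↔ IsBlockSorted b (b ∘ ofDual) (σ.trans toDual) := by
    rw [isBlockSorted_trans_toDual_iff, hsymm hσ, and_self]
  simp only [and_congr_right mono_iff, and_congr_right anti_iff]
  exact hmono.ncard_eq.trans hanti.ncard_eq.symm

end Involutions

section Descents

open Order

/-- The descents of `f`: the elements at which `f` takes a larger value than at their successor.
The greatest element is its own successor and hence never a descent. -/
def descentSet [Preorder α] [SuccOrder α] [Preorder β] (f : α → β) : Set α :=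
  {i | f (succ i) < f i}

/-- The peaks of `f`: the elements at which `f` takes a larger value than at both neighbours.
A least or greatest element is its own neighbour and hence never a peak. -/
def peakSet [Preorder α] [SuccOrder α] [PredOrder α] [Preorder β] (f : α → β) : Set α :=
  {i | f (pred i) < f i ∧ f (succ i) < f i}

/-- The elements of `S` below `i`. An element of `S` is thought of as a cut between itself and its
successor, so the fibers of `cutsBelow S` are the blocks into which `S` cuts the order. -/
def cutsBelow [Preorder α] (S : Set α) (i : α) : Set α :=
  S ∩ Iio i

theorem cutsBelow_mono [Preorder α] (S : Set α) : Monotone (cutsBelow S) :=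
  fun _ _ hij => inter_subset_inter_right S (Iio_subset_Iio hij)

variable [LinearOrder α] [LinearOrder β]

theorem descentSet_strictMono_comp {γ : Type*} [Preorder γ] [SuccOrder α] {g : β → γ}
    (hg : StrictMono g) (f : α → β) : descentSet (g ∘ f) = descentSet f :=
  Set.ext fun _ => hg.lt_iff_lt

theorem peakSet_strictMono_comp {γ : Type*} [Preorder γ] [SuccOrder α] [PredOrder α] {g : β → γ}
    (hg : StrictMono g) (f : α → β) : peakSet (g ∘ f) = peakSet f :=
  Set.ext fun _ => and_congr hg.lt_iff_lt hg.lt_iff_lt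

theorem peakSet_eq_sep_descentSet [SuccOrder α] [PredOrder α] {f : α → β}
    (hf : Function.Injective f) :
    peakSet f = {i ∈ descentSet f | pred i ∉ descentSet f} := by
  ext i
  refine and_comm.trans (and_congr_right fun hi => ?_)
  by_cases hmin : IsMin i
  · simpa [descentSet, hmin.pred_eq] using hi
  · have hne : f (pred i) ≠ f i := hf.ne (pred_lt_of_not_isMin hmin).ne
    simp [descentSet, succ_pred_of_not_isMin hmin, hne.le_iff_lt]

theorem cutsBelow_succ_eq_iff [SuccOrder α] {S : Set α} {i : α} (hi : ¬IsMax i) :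
    cutsBelow S (succ i) = cutsBelow S i ↔ i ∉ S := by
  rw [cutsBelow, cutsBelow, Iio_succ_of_not_isMax hi, ← Iio_insert]
  by_cases hS : i ∈ S
  · simp only [hS, not_true, iff_false, inter_insert_of_mem]
    exact fun h => (h.le (mem_insert i _)).2.false
  · simp only [hS, not_false_iff, inter_insert_of_notMem]

theorem forall_strictMonoOn_cutsBelow_iff [SuccOrder α] [IsSuccArchimedean α] {f : α → β}
    (hf : Function.Injective f) {S : Set α} :
    (∀ C, StrictMonoOn f (cutsBelow S ⁻¹' {C})) ↔ descentSet f ⊆ S := by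
  constructor
  · intro hmono i hi
    by_contra hS
    have hmax : ¬IsMax i := fun hmax => hi.ne (congrArg f hmax.succ_eq)
    exact (hmono _ rfl ((cutsBelow_succ_eq_iff hmax).2 hS) (lt_succ_of_not_isMax hmax)).not_gt hi
  · intro hsub C
    refine strictMonoOn_of_lt_succ (ordConnected_singleton.preimage_mono (cutsBelow_mono S)) ?_
    intro i hmax hi hsucc
    have hS : i ∉ S := (cutsBelow_succ_eq_iff hmax).1 (hsucc.trans hi.symm)
    exact (not_lt.1 fun h => hS (hsub h)).lt_of_ne (hf.ne (lt_succ_of_not_isMax hmax).ne)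

theorem ncard_involutions_descentSet_toDual [Finite α] [SuccOrder α] (Q : Set α → Prop) :
    {σ : Equiv.Perm α | σ ^ 2 = 1 ∧ Q (descentSet σ)}.ncard =
      {σ : Equiv.Perm α | σ ^ 2 = 1 ∧ Q (descentSet (toDual ∘ σ))}.ncard := by
  refine ncard_sep_comp_eq_of_ncard_sep_le_eq (s := {σ : Equiv.Perm α | σ ^ 2 = 1})
    (toFinite _) (fun S => ?_) Q
  have := ncard_involutions_strictMonoOn_eq_strictAntiOn (cutsBelow S) fun C =>
    ordConnected_singleton.preimage_mono (cutsBelow_mono S)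
  simpa only [← strictMonoOn_toDual_comp_iff, forall_strictMonoOn_cutsBelow_iff,
    Equiv.injective, toDual.injective.comp (Equiv.injective _)] using! this

theorem ncard_involutions_peakSet_descentSet_toDual [Finite α] [SuccOrder α] [PredOrder α]
    (j k : ℕ) :
    {σ : Equiv.Perm α | σ ^ 2 = 1 ∧ (peakSet σ).ncard = j ∧ (descentSet σ).ncard = k}.ncard =
      {σ : Equiv.Perm α | σ ^ 2 = 1 ∧ (peakSet (toDual ∘ σ)).ncard = j ∧
        (descentSet (toDual ∘ σ)).ncard = k}.ncard := by
  simpa only [peakSet_eq_sep_descentSet, Equiv.injective,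
    toDual.injective.comp (Equiv.injective _)] using ncard_involutions_descentSet_toDual
      fun D : Set α => {i ∈ D | pred i ∉ D}.ncard = j ∧ D.ncard = k

theorem ncard_setOf_not_isMax [Finite α] : {i : α | ¬IsMax i}.ncard = Nat.card α - 1 := by
  cases isEmpty_or_nonempty α
  · simp [Set.eq_empty_of_isEmpty]
  · obtain ⟨m, hm⟩ := Finite.exists_max (id : α → α)
    have : {i : α | ¬IsMax i} = {m}ᶜ := by
      ext i
      exact not_congr ⟨fun hi => hi.eq_of_le (hm i), fun hi x _ => hi ▸ hm x⟩
    rw [this, ncard_compl, ncard_singleton]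

theorem bijOn_pred_setOf_pred_lt [SuccOrder α] [PredOrder α] (f : α → β) :
    BijOn pred {i | f (pred i) < f i} {i | f i < f (succ i)} := by
  have hpred {i : α} (hi : f (pred i) < f i) : succ (pred i) = i :=
    succ_pred_of_not_isMin fun hmin => hi.ne (congrArg f hmin.pred_eq)
  have hsucc {i : α} (hi : f i < f (succ i)) : pred (succ i) = i :=
    pred_succ_of_not_isMax fun hmax => hi.ne' (congrArg f hmax.succ_eq)
  refine InvOn.bijOn (f' := succ) ⟨fun _ => hpred, fun _ => hsucc⟩ (fun i hi => ?_) fun i hi => ?_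
  · rwa [mem_ofPred, hpred hi]
  · rwa [mem_ofPred, hsucc hi]

theorem ncard_descentSet_add_ncard_setOf_lt_succ [Finite α] [SuccOrder α] {f : α → β}
    (hf : Function.Injective f) :
    (descentSet f).ncard + {i | f i < f (succ i)}.ncard = Nat.card α - 1 := by
  rw [← ncard_union_eq, ← ncard_setOf_not_isMax]
  · congr 1
    ext i
    rw [mem_ofPred, ← succ_eq_iff_isMax]
    exact lt_or_lt_iff_ne.trans hf.ne_iff
  · exact disjoint_left.2 fun i hi hi' => lt_asymm hi hi'

end Descents

section Reversal

open Order

variable {n : ℕ} [LinearOrder β]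

theorem fin_rev_succ (i : Fin n) : Fin.rev (succ i) = pred (Fin.rev i) :=
  Fin.revOrderIso.map_pred (toDual i)

theorem fin_rev_pred (i : Fin n) : Fin.rev (pred i) = succ (Fin.rev i) :=
  Fin.revOrderIso.map_succ (toDual i)

theorem ncard_preimage_rev (s : Set (Fin n)) : (Fin.rev ⁻¹' s).ncard = s.ncard :=
  ncard_preimage_of_injective_subset_range Fin.rev_injective
    (Fin.rev_surjective.range_eq ▸ subset_univ s)

theorem ncard_peakSet_comp_rev (f : Fin n → β) :
    (peakSet (f ∘ Fin.rev)).ncard = (peakSet f).ncard := by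
  have : peakSet (f ∘ Fin.rev) = Fin.rev ⁻¹' peakSet f := by
    ext i
    simp [peakSet, fin_rev_succ, fin_rev_pred, and_comm]
  rw [this, ncard_preimage_rev]

theorem ncard_descentSet_comp_rev_add {f : Fin n → β} (hf : Function.Injective f) :
    (descentSet (f ∘ Fin.rev)).ncard + (descentSet f).ncard = n - 1 := by
  have : descentSet (f ∘ Fin.rev) = Fin.rev ⁻¹' {i | f (pred i) < f i} := by
    ext i
    simp [descentSet, fin_rev_succ]
  rw [this, ncard_preimage_rev, (bijOn_pred_setOf_pred_lt f).ncard_eq, add_comm,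
    ncard_descentSet_add_ncard_setOf_lt_succ hf, Nat.card_fin]

theorem toDual_comp_conj_revPerm (π : Equiv.Perm (Fin n)) :
    toDual ∘ MulAut.conj Fin.revPerm π = (toDual ∘ Fin.rev) ∘ π ∘ Fin.rev :=
  rfl

theorem ncard_peakSet_toDual_comp_conj_revPerm (π : Equiv.Perm (Fin n)) :
    (peakSet (toDual ∘ MulAut.conj Fin.revPerm π)).ncard = (peakSet π).ncard := by
  rw [toDual_comp_conj_revPerm, peakSet_strictMono_comp Fin.rev_strictAnti.dual_right,
    ncard_peakSet_comp_rev]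

theorem ncard_descentSet_toDual_comp_conj_revPerm_add (π : Equiv.Perm (Fin n)) :
    (descentSet (toDual ∘ MulAut.conj Fin.revPerm π)).ncard + (descentSet π).ncard = n - 1 := by
  rw [toDual_comp_conj_revPerm, descentSet_strictMono_comp Fin.rev_strictAnti.dual_right,
    ncard_descentSet_comp_rev_add π.injective]

end Reversal

section OneLine

open Order

variable {n : ℕ}

theorem fin_val_succ {i : Fin n} (hi : (i : ℕ) + 1 < n) : ((succ i : Fin n) : ℕ) = i + 1 := by
  have hcov : i ⋖ ⟨i + 1, hi⟩ := Fin.covBy_iff.2 (covBy_add_one (i : ℕ))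
  rw [hcov.succ_eq]

theorem fin_val_pred {i : Fin n} (hi : 0 < (i : ℕ)) : ((pred i : Fin n) : ℕ) = i - 1 := by
  have hcov : ⟨i - 1, by omega⟩ ⋖ i := Fin.covBy_iff.2 (Nat.covBy_iff_add_one_eq.2 (by grind))
  rw [hcov.pred_eq]

theorem oneLine_val_add_one (π : Equiv.Perm (Fin n)) (i : Fin n) :
    oneLine n π (i + 1) = π i + 1 := by
  simp [oneLine]

theorem mem_descentSet_iff_oneLine {π : Equiv.Perm (Fin n)} {i : Fin n} :
    i ∈ descentSet π ↔ (i : ℕ) + 1 < n ∧ oneLine n π (i + 1 + 1) < oneLine n π (i + 1) := by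
  by_cases hi : (i : ℕ) + 1 < n
  · rw [oneLine_val_add_one, ← fin_val_succ hi, oneLine_val_add_one]
    simp [descentSet]
  · have hmax : IsMax i := fun j _ => by grind
    simp [descentSet, hmax.succ_eq, hi]

theorem apply_pred_lt_iff_oneLine {π : Equiv.Perm (Fin n)} {i : Fin n} :
    π (pred i) < π i ↔ 0 < (i : ℕ) ∧ oneLine n π i < oneLine n π (i + 1) := by
  by_cases hi : 0 < (i : ℕ)
  · have hpred : (i : ℕ) = (pred i : Fin n) + 1 := by rw [fin_val_pred hi, Nat.sub_add_cancel hi]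
    rw [oneLine_val_add_one, hpred, oneLine_val_add_one]
    simp
  · have hmin : IsMin i := fun j _ => by grind
    simp [hmin.pred_eq, hi]

theorem card_eq_ncard_of_forall_mem_iff_val_add_one_mem {t : Finset ℕ} {s : Set (Fin n)}
    (ht : t ⊆ Finset.Icc 1 n) (h : ∀ i, i ∈ s ↔ (i : ℕ) + 1 ∈ t) : t.card = s.ncard := by
  rw [← ncard_coe_finset, ← ncard_image_of_injective s
    ((add_left_injective 1).comp (Fin.val_injective (n := n)))]
  congr 1
  ext m
  constructor
  · intro hm
    have := Finset.mem_Icc.1 (ht hm)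
    have hm' : m - 1 + 1 = m := Nat.sub_add_cancel this.1
    exact ⟨⟨m - 1, by omega⟩, (h _).2 (hm'.symm ▸ hm), hm'⟩
  · rintro ⟨i, hi, rfl⟩
    exact (h i).1 hi

theorem des_eq_ncard_descentSet (π : Equiv.Perm (Fin n)) : des n π = (descentSet π).ncard := by
  refine card_eq_ncard_of_forall_mem_iff_val_add_one_mem (fun m hm => ?_) fun i => ?_
  · grind
  · rw [mem_descentSet_iff_oneLine]
    grind

theorem pk_eq_ncard_peakSet (π : Equiv.Perm (Fin n)) : pk n π = (peakSet π).ncard := by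
  refine card_eq_ncard_of_forall_mem_iff_val_add_one_mem (fun m hm => ?_) fun i => ?_
  · grind
  · refine (and_congr apply_pred_lt_iff_oneLine mem_descentSet_iff_oneLine).trans ?_
    grind

end OneLine

theorem stmt13 (n : ℕ) (hn : 1 ≤ n) (j k : ℕ) :
    Nat.card {π : Equiv.Perm (Fin n) // π ^ 2 = 1 ∧ pk n π = j ∧ des n π = k}
      = Nat.card {π : Equiv.Perm (Fin n) //
          π ^ 2 = 1 ∧ pk n π = j ∧ (des n π : ℤ) = (n : ℤ) - 1 - (k : ℤ)} := by
  let conjRev := MulAut.conj (Fin.revPerm (n := n))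
  have hsq (π : Equiv.Perm (Fin n)) : π ^ 2 = 1 ↔ conjRev π ^ 2 = 1 := by
    rw [← map_pow, conjRev.map_eq_one_iff]
  have hdes (π : Equiv.Perm (Fin n)) :
      (des n π : ℤ) = n - 1 - k ↔ (descentSet (toDual ∘ conjRev π)).ncard = k := by
    have : (descentSet (toDual ∘ conjRev π)).ncard + des n π = n - 1 :=
      des_eq_ncard_descentSet π ▸ ncard_descentSet_toDual_comp_conj_revPerm_add π
    omega
  have hpk (π : Equiv.Perm (Fin n)) : pk n π = (peakSet (toDual ∘ conjRev π)).ncard := by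
    rw [ncard_peakSet_toDual_comp_conj_revPerm, pk_eq_ncard_peakSet]
  calc
    _ = Nat.card {π : Equiv.Perm (Fin n) //
          π ^ 2 = 1 ∧ (peakSet (toDual ∘ π)).ncard = j ∧ (descentSet (toDual ∘ π)).ncard = k} := by
      simp only [pk_eq_ncard_peakSet, des_eq_ncard_descentSet]
      exact ncard_involutions_peakSet_descentSet_toDual j k
    _ = _ := (Nat.card_congr <| conjRev.toEquiv.subtypeEquiv fun π => by
      rw [hsq, hdes, hpk]
      rfl).symm
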